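/- Liaison Addition for general residuals: let K have characteristic zero and let A(fg) = A(f) ∪ A(g) ⊂ ℙⁿ be a hyperplane arrangement, where f = f₁⋯f_s and g = g₁⋯g_t are squarefree products of linear forms with fg squarefree, such that (i) the ideal (f_i, f_j, g) has height 3 whenever i ≠ j, and (ii) the ideal (f, g_i, g_j) has height 3 whenever i ≠ j. Then, for a general linear form ℓ, the general residuals with respect to ℓ satisfy: (a) r_{A(fg)} = r_{A(f)} ∩ r_{A(g)} ∩ (f, g); and (b) r_{A(fg)} = g·r_{A(f)} + f·r_{A(g)}. -/

import Mathlib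

open MvPolynomial

/-- The derivative `∂f/∂ℓ = Σᵢ aᵢ·∂f/∂xᵢ` of `f` in the direction of the linear form
`ℓ = Σᵢ aᵢxᵢ` with coefficient vector `a`. -/
noncomputable def lderiv {K : Type*} [CommRing K] {m : ℕ} (a : Fin m → K)
    (f : MvPolynomial (Fin m) K) : MvPolynomial (Fin m) K :=
  ∑ i, a i • pderiv i f

/-- The Jacobian ideal of `f`, generated by all partial derivatives of `f`. -/
noncomputable def jacobianIdeal {K : Type*} [CommRing K] {m : ℕ}
    (f : MvPolynomial (Fin m) K) : Ideal (MvPolynomial (Fin m) K) :=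
  Ideal.span (Set.range fun i => pderiv i f)

/-- The general residual of the arrangement with defining polynomial `f` with respect to
the linear form with coefficient vector `a`: `r = (f, ∂f/∂ℓ) : Jac(f)`. -/
noncomputable def genResidual {K : Type*} [CommRing K] {m : ℕ} (a : Fin m → K)
    (f : MvPolynomial (Fin m) K) : Ideal (MvPolynomial (Fin m) K) :=
  (Ideal.span {f, lderiv a f}).colon (jacobianIdeal f)

/-- The height of an ideal `I` of a commutative ring: the infimum of the heights (in the
prime spectrum) of the prime ideals containing `I`. -/
noncomputable def idealHeight {R : Type*} [CommRing R] (I : Ideal R) : ℕ∞ :=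
  ⨅ (P : PrimeSpectrum R) (_ : I ≤ P.asIdeal), Order.height P

/-!
Put `θ = u • ∂ₖ - b • ∂_ℓ`. Then `u` lies in `r_h` iff for every `k` some choice of `b` gives
`h ∣ θ h`, that is, makes `θ` a logarithmic derivation of the arrangement `h = 0`. If `fg` is
squarefree, a logarithmic derivation for `fg` is one for `f` and for `g`, and `g • θ` is one for
`fg` if `θ` is one for `f`; hence `g r_f + f r_g ⊆ r_{fg} ⊆ r_f ∩ r_g`.

For linear forms `p`, `q` not vanishing at the coefficient vector `a` of `ℓ`, the form
`H = q(a) p - p(a) q` is killed by `∂_ℓ`, so `u ∂ₖH = θ H ∈ (p, q)`. As some `∂ₖH` is a nonzero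
constant, `r_{pq} ⊆ (p, q)`. The height hypotheses give `(f, g) = ⋂ (fᵢ, gⱼ)`, so
`r_{fg} ⊆ (f, g)`.

They also make `g` a nonzerodivisor modulo every `(fᵢ, fⱼ)`, hence modulo the complete intersection
`(f, ∂_ℓ f)` and modulo its colon ideal `r_f`; symmetrically for `f` and `r_g`. Consequently
`r_f ∩ r_g ∩ (f, g) = g r_f + f r_g`, and all the inclusions are equalities.
-/

section Regular

variable {R : Type*} [CommRing R] {ι : Type*}

lemma isSMulRegular_quotient_iff {I : Ideal R} {l : R} :
    IsSMulRegular (R ⧸ I) l ↔ ∀ x, l * x ∈ I → x ∈ I :=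
  isSMulRegular_quotient_iff_mem_of_smul_mem I l

lemma isSMulRegular_quotient_of_one_mem {I : Ideal R} (hI : 1 ∈ I) (l : R) :
    IsSMulRegular (R ⧸ I) l :=
  isSMulRegular_quotient_iff.2 fun x _ => mul_one x ▸ I.mul_mem_left x hI

lemma isSMulRegular_quotient_of_notMem {P : Ideal R} (hP : P.IsPrime) {l : R} (hl : l ∉ P) :
    IsSMulRegular (R ⧸ P) l :=
  isSMulRegular_quotient_iff.2 fun _ hx => (hP.mem_or_mem hx).resolve_left hl

lemma isSMulRegular_quotient_colon {I : Ideal R} {l : R} (hl : IsSMulRegular (R ⧸ I) l)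
    (S : Set R) : IsSMulRegular (R ⧸ I.colon S) l := by
  rw [isSMulRegular_quotient_iff] at hl ⊢
  simp only [Submodule.mem_colon, smul_eq_mul]
  exact fun x hx y hy => hl _ (by simpa only [mul_assoc] using hx y hy)

lemma isSMulRegular_quotient_iInf {κ : Sort*} {I : κ → Ideal R} {l : R}
    (hl : ∀ i, IsSMulRegular (R ⧸ I i) l) : IsSMulRegular (R ⧸ ⨅ i, I i) l := by
  simp only [isSMulRegular_quotient_iff, Ideal.mem_iInf] at hl ⊢
  exact fun x hx i => hl i x (hx i)

lemma isSMulRegular_quotient_of_sup_of_colon {I : Ideal R} {g l : R}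
    (hsup : IsSMulRegular (R ⧸ (I ⊔ Ideal.span {g})) l)
    (hcolon : IsSMulRegular (R ⧸ I.colon {g}) l) : IsSMulRegular (R ⧸ I) l := by
  simp only [isSMulRegular_quotient_iff, Submodule.mem_colon_singleton, smul_eq_mul]
    at hsup hcolon ⊢
  intro x hx
  obtain ⟨i, hi, y, hy, rfl⟩ := Submodule.mem_sup.1 (hsup x (Ideal.mem_sup_left hx))
  obtain ⟨y, rfl⟩ := Ideal.mem_span_singleton'.1 hy
  refine I.add_mem hi (hcolon y ?_)
  convert I.sub_mem hx (I.mul_mem_left l hi) using 1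
  ring

lemma isSMulRegular_quotient_span_singleton_of_isRelPrime [DecompositionMonoid R] {p q : R}
    (h : IsRelPrime p q) : IsSMulRegular (R ⧸ Ideal.span {p}) q := by
  simp only [isSMulRegular_quotient_iff, Ideal.mem_span_singleton]
  exact fun x => h.dvd_of_dvd_mul_left

lemma colon_span_pair_mul {p g : R} (hg : IsSMulRegular (R ⧸ Ideal.span {p}) g) (q : R) :
    (Ideal.span {p, g * q}).colon {g} = Ideal.span {p, q} := by
  ext x
  simp only [Submodule.mem_colon_singleton, smul_eq_mul, Ideal.mem_span_pair]
  constructor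
  · rintro ⟨a, b, hab⟩
    obtain ⟨c, hc⟩ := Ideal.mem_span_singleton'.1 <| isSMulRegular_quotient_iff.1 hg (x - b * q) <|
      Ideal.mem_span_singleton'.2 ⟨a, by linear_combination hab⟩
    exact ⟨c, b, by linear_combination hc⟩
  · rintro ⟨a, b, rfl⟩
    exact ⟨a * g, b, by ring⟩

lemma isSMulRegular_quotient_span_pair_mul {p g q l : R}
    (hg : IsSMulRegular (R ⧸ Ideal.span {p}) g)
    (hlg : IsSMulRegular (R ⧸ Ideal.span {p, g}) l)
    (hlq : IsSMulRegular (R ⧸ Ideal.span {p, q}) l) :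
    IsSMulRegular (R ⧸ Ideal.span {p, g * q}) l := by
  refine isSMulRegular_quotient_of_sup_of_colon (g := g) ?_ (by rwa [colon_span_pair_mul hg])
  have hsup : Ideal.span {p, g * q} ⊔ Ideal.span {g} = Ideal.span {p, g} := by
    rw [← Ideal.span_union, Set.insert_union, Set.singleton_union, Ideal.span_insert,
      Ideal.span_insert, Ideal.span_insert p,
      sup_eq_right.2 (Ideal.span_singleton_le_span_singleton.2 (dvd_mul_right g q))]
  rwa [hsup]

lemma isSMulRegular_quotient_span_pair_prod {p l : R} {g : ι → R} {s : Finset ι}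
    (hg : ∀ i ∈ s, IsSMulRegular (R ⧸ Ideal.span {p}) (g i))
    (hl : ∀ i ∈ s, IsSMulRegular (R ⧸ Ideal.span {p, g i}) l) :
    IsSMulRegular (R ⧸ Ideal.span {p, ∏ i ∈ s, g i}) l := by
  classical
  induction s using Finset.induction_on with
  | empty => exact isSMulRegular_quotient_of_one_mem (Ideal.subset_span (by simp)) l
  | insert k s hk ih =>
    rw [Finset.prod_insert hk]
    rw [Finset.forall_mem_insert] at hg hl
    exact isSMulRegular_quotient_span_pair_mul hg.1 hl.1 (ih hg.2 hl.2)

lemma span_pair_mul_eq_inf {q a b : R} (ha : IsSMulRegular (R ⧸ Ideal.span {q, b}) a) :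
    Ideal.span {q, a * b} = Ideal.span {q, a} ⊓ Ideal.span {q, b} := by
  ext x
  simp only [Ideal.mem_inf, Ideal.mem_span_pair (y := a * b), Ideal.mem_span_pair (y := a)]
  constructor
  · rintro ⟨c, d, rfl⟩
    exact ⟨⟨c, d * b, by ring⟩, Ideal.mem_span_pair.2 ⟨c, d * a, by ring⟩⟩
  · rintro ⟨⟨c, d, rfl⟩, hx⟩
    have had : a * d ∈ Ideal.span {q, b} := mul_comm d a ▸
      (Ideal.add_mem_iff_right _ (Ideal.mul_mem_left _ c (Ideal.subset_span (by simp)))).1 hx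
    obtain ⟨c', d', rfl⟩ := Ideal.mem_span_pair.1 (isSMulRegular_quotient_iff.1 ha d had)
    exact ⟨c + c' * a, d', by ring⟩

lemma span_pair_prod_eq_iInf {q : R} {F : ι → R} {s : Finset ι}
    (hF : (s : Set ι).Pairwise fun i j => IsSMulRegular (R ⧸ Ideal.span {q, F j}) (F i)) :
    Ideal.span {q, ∏ i ∈ s, F i} = ⨅ i ∈ s, Ideal.span {q, F i} := by
  classical
  induction s using Finset.induction_on with
  | empty => simp [Ideal.span_insert]
  | insert k s hk ih =>
    have ih := ih (hF.mono (Finset.coe_subset.2 (Finset.subset_insert k s)))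
    have hreg : IsSMulRegular (R ⧸ Ideal.span {q, ∏ i ∈ s, F i}) (F k) := by
      rw [ih]
      exact isSMulRegular_quotient_iInf fun i => isSMulRegular_quotient_iInf fun hi =>
        hF (Finset.mem_insert_self k s) (Finset.mem_insert_of_mem hi)
          (ne_of_mem_of_not_mem hi hk).symm
    rw [Finset.prod_insert hk, span_pair_mul_eq_inf hreg, ih, Finset.iInf_insert]

lemma span_prod_prod_eq_iInf {κ : Type*} [Fintype ι] [Fintype κ] {F : ι → R} {G : κ → R}
    (hF : ∀ k, Pairwise fun i j => IsSMulRegular (R ⧸ Ideal.span {F j, G k}) (F i))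
    (hG : ∀ k, Pairwise fun i j => IsSMulRegular (R ⧸ Ideal.span {G j, F k}) (G i)) :
    Ideal.span {∏ i, F i, ∏ j, G j} = ⨅ i, ⨅ j, Ideal.span {F i, G j} := by
  have hG' (i : ι) (j k : κ) (hjk : j ≠ k) :
      IsSMulRegular (R ⧸ Ideal.span {F i, G k}) (G j) := by
    rw [Ideal.span_pair_comm]
    exact hG i hjk
  have hFG (i : ι) : Ideal.span {F i, ∏ j, G j} = ⨅ j, Ideal.span {F i, G j} := by
    simpa using span_pair_prod_eq_iInf (s := Finset.univ) fun j _ k _ => hG' i j k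
  have hGF (i j : ι) (hij : i ≠ j) :
      IsSMulRegular (R ⧸ Ideal.span {∏ k, G k, F j}) (F i) := by
    rw [Ideal.span_pair_comm, hFG]
    exact isSMulRegular_quotient_iInf fun k => hF k hij
  rw [Ideal.span_pair_comm, span_pair_prod_eq_iInf fun i _ j _ => hGF i j]
  simp only [Finset.mem_univ, iInf_pos, Ideal.span_pair_comm (x := ∏ k, G k), hFG]

theorem inf_inf_span_pair_eq_sup {I J : Ideal R} {f g : R} (hf : f ∈ I) (hg : g ∈ J)
    (hgI : IsSMulRegular (R ⧸ I) g) (hfJ : IsSMulRegular (R ⧸ J) f) :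
    I ⊓ J ⊓ Ideal.span {f, g} = Ideal.span {g} * I ⊔ Ideal.span {f} * J := by
  rw [isSMulRegular_quotient_iff] at hgI hfJ
  apply le_antisymm
  · rintro u ⟨⟨huI, huJ⟩, hu⟩
    obtain ⟨x, y, rfl⟩ := Ideal.mem_span_pair.1 hu
    have hy : y ∈ I := hgI y <| mul_comm y g ▸ (I.add_mem_iff_right (I.mul_mem_left x hf)).1 huI
    have hx : x ∈ J := hfJ x <| mul_comm x f ▸ (J.add_mem_iff_left (J.mul_mem_left y hg)).1 huJ
    rw [add_comm, mul_comm y, mul_comm x]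
    exact Submodule.add_mem_sup (Ideal.mul_mem_mul (Ideal.mem_span_singleton_self g) hy)
      (Ideal.mul_mem_mul (Ideal.mem_span_singleton_self f) hx)
  · simp only [sup_le_iff, Ideal.span_singleton_mul_le_iff]
    exact ⟨fun z hz => ⟨⟨I.mul_mem_left g hz, J.mul_mem_right z hg⟩,
        Ideal.mul_mem_right z _ (Ideal.subset_span (Set.mem_insert_of_mem f rfl))⟩,
      fun z hz => ⟨⟨I.mul_mem_right z hf, J.mul_mem_left f hz⟩,
        Ideal.mul_mem_right z _ (Ideal.subset_span (Set.mem_insert f {g}))⟩⟩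

end Regular

section Derivation

variable {A R : Type*} [CommRing A] [CommRing R] [Algebra A R]

lemma dvd_derivation_of_mul_dvd [DecompositionMonoid R] {p q : R} (hpq : IsRelPrime p q)
    (θ : Derivation A R R) (h : p * q ∣ θ (p * q)) : p ∣ θ p := by
  rw [θ.leibniz, smul_eq_mul, smul_eq_mul] at h
  exact hpq.dvd_of_dvd_mul_left <|
    (dvd_add_right (dvd_mul_right p (θ q))).1 ((dvd_mul_right p q).trans h)

lemma derivation_smul_sub_smul_mem_span_pair [DecompositionMonoid R] {p q : R}
    (hpq : IsRelPrime p q) (θ : Derivation A R R) (h : p * q ∣ θ (p * q)) (c d : A) :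
    θ (c • p - d • q) ∈ Ideal.span {p, q} := by
  have hp : θ p ∈ Ideal.span {p, q} :=
    Ideal.mem_of_dvd _ (dvd_derivation_of_mul_dvd hpq θ h) (Ideal.subset_span (by simp))
  have hq : θ q ∈ Ideal.span {p, q} :=
    Ideal.mem_of_dvd _ (dvd_derivation_of_mul_dvd hpq.symm θ (mul_comm p q ▸ h))
      (Ideal.subset_span (by simp))
  rw [map_sub, θ.map_smul, θ.map_smul]
  exact sub_mem (Submodule.smul_of_tower_mem _ c hp) (Submodule.smul_of_tower_mem _ d hq)

lemma mul_dvd_smul_derivation_mul {θ : Derivation A R R} {f : R} (h : f ∣ θ f) (g : R) :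
    f * g ∣ (g • θ) (f * g) := by
  rw [Derivation.smul_apply, θ.leibniz, smul_eq_mul, smul_eq_mul, smul_eq_mul, mul_comm f g]
  exact mul_dvd_mul_left g (dvd_add (dvd_mul_right f (θ g)) (h.mul_left g))

lemma mul_mem_span_pair_derivation_iff (D E : Derivation A R R) (f u : R) :
    u * E f ∈ Ideal.span {f, D f} ↔ ∃ b : R, f ∣ (u • E - b • D) f := by
  simp only [Ideal.mem_span_pair, Derivation.sub_apply, Derivation.smul_apply, smul_eq_mul]
  rw [exists_comm]
  exact exists_congr fun b => exists_congr fun c =>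
    ⟨fun h => by linear_combination -h, fun h => by linear_combination -h⟩

lemma span_pair_derivation_sup_span_singleton (D : Derivation A R R) {f : R} (hf : IsUnit (D f))
    (P : R) : Ideal.span {f * P, D (f * P)} ⊔ Ideal.span {f} = Ideal.span {f, P} := by
  obtain ⟨v, hv⟩ := hf.exists_left_inv
  ext x
  simp only [Submodule.mem_sup, Ideal.mem_span_pair, Ideal.mem_span_singleton', D.leibniz,
    smul_eq_mul]
  constructor
  · rintro ⟨_, ⟨a, b, rfl⟩, _, ⟨c, rfl⟩, rfl⟩
    exact ⟨a * P + b * D P + c, b * D f, by ring⟩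
  · rintro ⟨a, b, rfl⟩
    exact ⟨_, ⟨0, b * v, rfl⟩, _, ⟨a - b * v * D P, rfl⟩, by linear_combination b * P * hv⟩

lemma colon_span_pair_derivation [IsDomain R] [DecompositionMonoid R] (D : Derivation A R R)
    {f P : R} (hf : IsUnit (D f)) (hfP : IsRelPrime f P) :
    (Ideal.span {f * P, D (f * P)}).colon {f} = Ideal.span {P, f * D P} := by
  have hf0 : f ≠ 0 := by
    rintro rfl
    exact not_isUnit_zero (D.map_zero ▸ hf)
  ext x
  simp only [Submodule.mem_colon_singleton, smul_eq_mul, Ideal.mem_span_pair, D.leibniz]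
  constructor
  · rintro ⟨a, b, hab⟩
    have hb : f ∣ b * D f * P := ⟨x - a * P - b * D P, by linear_combination hab⟩
    obtain ⟨b, rfl⟩ := hf.dvd_mul_right.1 (hfP.dvd_of_dvd_mul_right hb)
    exact ⟨a + b * D f, b, mul_left_cancel₀ hf0 (by linear_combination hab)⟩
  · rintro ⟨a, b, rfl⟩
    exact ⟨a - b * D f, b * f, by ring⟩

lemma isSMulRegular_quotient_span_mul_derivation [IsDomain R] [DecompositionMonoid R]
    (D : Derivation A R R) {f P l : R} (hf : IsUnit (D f)) (hfP : IsRelPrime f P)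
    (hlf : IsSMulRegular (R ⧸ Ideal.span {f, P}) l)
    (hlP : IsSMulRegular (R ⧸ Ideal.span {P, D P}) l) :
    IsSMulRegular (R ⧸ Ideal.span {f * P, D (f * P)}) l := by
  refine isSMulRegular_quotient_of_sup_of_colon (g := f) ?_ ?_
  · rwa [span_pair_derivation_sup_span_singleton D hf]
  · rw [colon_span_pair_derivation D hf hfP]
    exact isSMulRegular_quotient_span_pair_mul
      (isSMulRegular_quotient_span_singleton_of_isRelPrime hfP.symm)
      (by rwa [Ideal.span_pair_comm]) hlP

theorem isSMulRegular_quotient_span_prod_derivation [IsDomain R] [DecompositionMonoid R]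
    (D : Derivation A R R) {ι : Type*} {F : ι → R} {s : Finset ι} {l : R}
    (hD : ∀ i ∈ s, IsUnit (D (F i))) (hF : (s : Set ι).Pairwise fun i j => IsRelPrime (F i) (F j))
    (hl : (s : Set ι).Pairwise fun i j => IsSMulRegular (R ⧸ Ideal.span {F i, F j}) l) :
    IsSMulRegular (R ⧸ Ideal.span {∏ i ∈ s, F i, D (∏ i ∈ s, F i)}) l := by
  classical
  induction s using Finset.induction_on with
  | empty => exact isSMulRegular_quotient_of_one_mem (Ideal.subset_span (by simp)) l
  | insert k s hk ih =>
    have hsub : (s : Set ι) ⊆ ↑(insert k s) := Finset.coe_subset.2 (Finset.subset_insert k s)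
    have hFk (i : ι) (hi : i ∈ s) : IsRelPrime (F k) (F i) :=
      hF (Finset.mem_insert_self k s) (hsub hi) (ne_of_mem_of_not_mem hi hk).symm
    have hlk (i : ι) (hi : i ∈ s) : IsSMulRegular (R ⧸ Ideal.span {F k, F i}) l :=
      hl (Finset.mem_insert_self k s) (hsub hi) (ne_of_mem_of_not_mem hi hk).symm
    rw [Finset.forall_mem_insert] at hD
    rw [Finset.prod_insert hk]
    refine isSMulRegular_quotient_span_mul_derivation D hD.1 (.prod_right hFk) ?_
      (ih hD.2 (hF.mono hsub) (hl.mono hsub))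
    exact isSMulRegular_quotient_span_pair_prod
      (fun i hi => isSMulRegular_quotient_span_singleton_of_isRelPrime (hFk i hi)) hlk

end Derivation

section Height

variable {R : Type*} [CommRing R]

lemma idealHeight_mono {I J : Ideal R} (h : I ≤ J) : idealHeight I ≤ idealHeight J :=
  le_iInf₂ fun P hP => iInf₂_le P (h.trans hP)

lemma idealHeight_le_height {P : Ideal R} [hP : P.IsPrime] : idealHeight P ≤ P.height :=
  (iInf₂_le (⟨P, hP⟩ : PrimeSpectrum R) le_rfl).trans_eq
    (PrimeSpectrum.height_eq_orderHeight _).symm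

lemma idealHeight_span_pair_le_two [IsNoetherianRing R] {p q : R}
    (hpq : (Ideal.span {p, q}).IsPrime) : idealHeight (Ideal.span {p, q}) ≤ 2 := by
  have hcard : ({p, q} : Set R).ncard ≤ 2 := by
    simpa using Set.ncard_insert_le p {q}
  refine idealHeight_le_height.trans ((Ideal.height_le_card_of_mem_minimalPrimes_span
    (Set.toFinite {p, q}) ?_).trans (Nat.cast_le.2 hcard))
  rw [Ideal.minimalPrimes_eq_subsingleton_self, Set.mem_singleton_iff]

lemma isSMulRegular_quotient_span_pair_of_three_le_idealHeight [IsNoetherianRing R] {p q r : R}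
    (hpq : (Ideal.span {p, q}).IsPrime) (h : 3 ≤ idealHeight (Ideal.span {p, q, r})) :
    IsSMulRegular (R ⧸ Ideal.span {p, q}) r := by
  refine isSMulRegular_quotient_of_notMem hpq fun hr => ?_
  have hle : Ideal.span {p, q, r} ≤ Ideal.span {p, q} := by
    simp only [Ideal.span_le, Set.insert_subset_iff, Set.singleton_subset_iff]
    exact ⟨Ideal.subset_span (by simp), Ideal.subset_span (by simp), hr⟩
  exact absurd (h.trans ((idealHeight_mono hle).trans (idealHeight_span_pair_le_two hpq)))
    (by decide)

lemma isSMulRegular_quotient_span_pair_of_dvd_of_three_le_idealHeight [IsNoetherianRing R]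
    {p q r g : R} (hqr : (Ideal.span {q, r}).IsPrime) (hrg : r ∣ g)
    (h : 3 ≤ idealHeight (Ideal.span {p, q, g})) :
    IsSMulRegular (R ⧸ Ideal.span {q, r}) p := by
  refine isSMulRegular_quotient_span_pair_of_three_le_idealHeight hqr
    (h.trans (idealHeight_mono ?_))
  simp only [Ideal.span_le, Set.insert_subset_iff, Set.singleton_subset_iff]
  exact ⟨Ideal.subset_span (by simp), Ideal.subset_span (by simp),
    Ideal.mem_of_dvd _ hrg (Ideal.subset_span (by simp))⟩

end Height

section DirectionalDerivation

variable {σ R : Type*} [CommRing R]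

lemma isHomogeneous_one_iff_mem_span_range_X {p : MvPolynomial σ R} :
    p.IsHomogeneous 1 ↔ p ∈ Submodule.span R (Set.range X) := by
  rw [← homogeneousSubmodule_one_eq_span_X, mem_homogeneousSubmodule]

/-- The derivation `∑ i, a i • ∂/∂xᵢ`, that is `lderiv a` as a derivation in any number of
variables. -/
noncomputable def directionalDerivation (a : σ → R) :
    Derivation R (MvPolynomial σ R) (MvPolynomial σ R) :=
  mkDerivation R fun i => C (a i)

lemma directionalDerivation_of_isHomogeneous_one (a : σ → R) {p : MvPolynomial σ R}
    (hp : p.IsHomogeneous 1) : directionalDerivation a p = C (eval a p) := by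
  have h : Set.EqOn (directionalDerivation a : MvPolynomial σ R →ₗ[R] MvPolynomial σ R)
      (Algebra.linearMap R _ ∘ₗ (aeval a : MvPolynomial σ R →ₐ[R] R).toLinearMap)
      (Submodule.span R (Set.range X) : Submodule R (MvPolynomial σ R)) := by
    refine LinearMap.eqOn_span ?_
    rintro _ ⟨i, rfl⟩
    simp [directionalDerivation, mkDerivation_X, MvPolynomial.algebraMap_eq]
  simpa [MvPolynomial.algebraMap_eq, aeval_eq_eval] using
    h (isHomogeneous_one_iff_mem_span_range_X.1 hp)

lemma directionalDerivation_single [DecidableEq σ] (i : σ) :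
    directionalDerivation (Pi.single i 1 : σ → R) = pderiv i :=
  derivation_ext fun j => by
    simp [directionalDerivation, mkDerivation_X, pderiv_X, Pi.single_apply, apply_ite C]

lemma lderiv_eq_directionalDerivation {m : ℕ} (a : Fin m → R) (f : MvPolynomial (Fin m) R) :
    lderiv a f = directionalDerivation a f := by
  have hsum (f : MvPolynomial (Fin m) R) :
      lderiv a f = (∑ i, a i • pderiv i : Derivation R _ (MvPolynomial (Fin m) R)) f := by
    have := congr_fun (map_sum Derivation.coeFnAddMonoidHom (fun i => a i • pderiv i) .univ) f
    simpa only [lderiv, Finset.sum_apply, Derivation.coeFnAddMonoidHom_apply,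
      Derivation.smul_apply] using this.symm
  rw [hsum]
  refine Derivation.congr_fun (derivation_ext fun j => ?_) f
  rw [← hsum]
  simp [lderiv, directionalDerivation, mkDerivation_X, pderiv_X, Pi.single_apply, smul_eq_C_mul]

end DirectionalDerivation

section LinearForm

variable {σ K : Type*} [Field K]

lemma isPrime_span_of_isHomogeneous_one {s : Set (MvPolynomial σ K)}
    (hs : ∀ p ∈ s, p.IsHomogeneous 1) : (Ideal.span s).IsPrime := by
  obtain ⟨ρ, hρ⟩ := (Submodule.span K s).subtype.exists_leftInverse_of_injective
    (Submodule.ker_subtype _)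
  -- `φ` projects the variables along the `K`-span of `s`: it kills `s` and is the identity modulo
  -- the ideal `(s)`, so `(s) = ker φ`.
  let φ : MvPolynomial σ K →ₐ[K] MvPolynomial σ K :=
    aeval fun i => X i - (ρ (X i) : MvPolynomial σ K)
  have hφ_linear : Set.EqOn φ.toLinearMap
      (.id - (Submodule.span K s).subtype ∘ₗ ρ : MvPolynomial σ K →ₗ[K] MvPolynomial σ K)
      (Submodule.span K (Set.range X) : Submodule K (MvPolynomial σ K)) := by
    refine LinearMap.eqOn_span ?_
    rintro _ ⟨i, rfl⟩
    simp [φ]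
  have hφ_zero : ∀ p ∈ s, φ p = 0 := fun p hp => by
    have hρp : ρ p = ⟨p, Submodule.subset_span hp⟩ :=
      LinearMap.congr_fun hρ ⟨p, Submodule.subset_span hp⟩
    have := hφ_linear (isHomogeneous_one_iff_mem_span_range_X.1 (hs p hp))
    simpa [hρp] using this
  have hφ_mk : (Ideal.Quotient.mkₐ K (Ideal.span s)).comp φ = Ideal.Quotient.mkₐ K _ := by
    refine MvPolynomial.algHom_ext fun i => ?_
    have hmem : (ρ (X i) : MvPolynomial σ K) ∈ Ideal.span s :=
      Submodule.span_le_restrictScalars K (MvPolynomial σ K) s (ρ (X i)).2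
    simpa [φ, Ideal.Quotient.eq_zero_iff_mem] using hmem
  have hker : Ideal.span s = RingHom.ker φ := by
    refine le_antisymm (Ideal.span_le.2 hφ_zero) fun x hx => ?_
    rw [← Ideal.Quotient.eq_zero_iff_mem]
    have := AlgHom.congr_fun hφ_mk x
    rw [AlgHom.comp_apply, (RingHom.mem_ker.1 hx : φ x = 0), map_zero] at this
    exact this.symm
  exact hker ▸ RingHom.ker_isPrime φ

lemma isPrime_span_pair_of_isHomogeneous_one {p q : MvPolynomial σ K} (hp : p.IsHomogeneous 1)
    (hq : q.IsHomogeneous 1) : (Ideal.span {p, q}).IsPrime :=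
  isPrime_span_of_isHomogeneous_one (by rintro _ (rfl | rfl) <;> assumption)

lemma irreducible_of_isHomogeneous_one {p : MvPolynomial σ K} (hp : p.IsHomogeneous 1)
    (hp0 : p ≠ 0) : Irreducible p :=
  ((Ideal.span_singleton_prime hp0).1 <|
    isPrime_span_of_isHomogeneous_one (by rintro _ rfl; exact hp)).irreducible

lemma isRelPrime_of_isHomogeneous_one {p q : MvPolynomial σ K} (hp : p.IsHomogeneous 1)
    (hq : q.IsHomogeneous 1) (hp0 : p ≠ 0) (hq0 : q ≠ 0) (hpq : ∀ c : K, p ≠ c • q) :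
    IsRelPrime p q := by
  have hp := irreducible_of_isHomogeneous_one hp hp0
  have hq := irreducible_of_isHomogeneous_one hq hq0
  refine hp.isRelPrime_iff_not_dvd.2 fun hdvd => ?_
  obtain ⟨u, hu⟩ := (hp.associated_of_dvd hq hdvd).symm
  obtain ⟨c, -, hc⟩ := MvPolynomial.isUnit_iff_eq_C_of_isReduced.1 u.isUnit
  exact hpq c (by rw [← hu, hc, mul_comm, C_mul'])

lemma squarefree_prod_of_isHomogeneous_one {ι : Type*} [Fintype ι] {F : ι → MvPolynomial σ K}
    (hF : ∀ i, (F i).IsHomogeneous 1) (hF0 : ∀ i, F i ≠ 0)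
    (hprop : ∀ i j, i ≠ j → ∀ c : K, F i ≠ c • F j) : Squarefree (∏ i, F i) :=
  Finset.squarefree_prod_of_pairwise_isCoprime
    (fun i _ j _ hij => isRelPrime_of_isHomogeneous_one (hF i) (hF j) (hF0 i) (hF0 j)
      (hprop i j hij))
    fun i _ => (irreducible_of_isHomogeneous_one (hF i) (hF0 i)).squarefree

lemma squarefree_prod_mul_prod_of_isHomogeneous_one {ι κ : Type*} [Fintype ι] [Fintype κ]
    {F : ι → MvPolynomial σ K} {G : κ → MvPolynomial σ K}
    (hF : ∀ i, (F i).IsHomogeneous 1) (hG : ∀ i, (G i).IsHomogeneous 1)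
    (hF0 : ∀ i, F i ≠ 0) (hG0 : ∀ i, G i ≠ 0)
    (hFprop : ∀ i j, i ≠ j → ∀ c : K, F i ≠ c • F j)
    (hGprop : ∀ i j, i ≠ j → ∀ c : K, G i ≠ c • G j)
    (hFG : ∀ i j, ∀ c : K, F i ≠ c • G j) : Squarefree ((∏ i, F i) * ∏ j, G j) :=
  squarefree_mul_iff.2
    ⟨.prod_left fun i _ => .prod_right fun j _ =>
      isRelPrime_of_isHomogeneous_one (hF i) (hG j) (hF0 i) (hG0 j) (hFG i j),
    squarefree_prod_of_isHomogeneous_one hF hF0 hFprop,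
    squarefree_prod_of_isHomogeneous_one hG hG0 hGprop⟩

lemma exists_isUnit_pderiv_of_isHomogeneous_one [Finite σ] {p : MvPolynomial σ K}
    (hp : p.IsHomogeneous 1) (hp0 : p ≠ 0) : ∃ i, IsUnit (pderiv i p) := by
  classical
  cases nonempty_fintype σ
  by_contra! hunit
  have hzero (i : σ) : pderiv i p = 0 := by
    have hi := hunit i
    rw [← directionalDerivation_single, directionalDerivation_of_isHomogeneous_one _ hp] at hi ⊢
    simpa using hi
  simpa [hzero, hp0.symm] using hp.sum_X_mul_pderiv

end LinearForm

section Residual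

variable {R : Type*} [CommRing R] {m : ℕ} {a : Fin m → R}

lemma mem_genResidual_iff {f u : MvPolynomial (Fin m) R} :
    u ∈ genResidual a f ↔
      ∀ i, ∃ b : MvPolynomial (Fin m) R,
        f ∣ (u • pderiv i - b • directionalDerivation a : Derivation R _ _) f := by
  simp only [genResidual, jacobianIdeal, lderiv_eq_directionalDerivation,
    ← mul_mem_span_pair_derivation_iff, Ideal.colon_span, Submodule.mem_colon,
    Set.forall_mem_range, smul_eq_mul]

lemma self_mem_genResidual (f : MvPolynomial (Fin m) R) : f ∈ genResidual a f :=
  mem_genResidual_iff.2 fun i => ⟨0, by simp⟩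

lemma genResidual_le_of_dvd [DecompositionMonoid (MvPolynomial (Fin m) R)]
    {f h : MvPolynomial (Fin m) R} (hh : Squarefree h) (hfh : f ∣ h) :
    genResidual a h ≤ genResidual a f := by
  obtain ⟨g, rfl⟩ := hfh
  simp only [SetLike.le_def, mem_genResidual_iff]
  exact fun u hu i => (hu i).imp fun b =>
    dvd_derivation_of_mul_dvd (IsRelPrime.of_squarefree_mul hh) _

lemma span_singleton_mul_genResidual_le (f g : MvPolynomial (Fin m) R) :
    Ideal.span {g} * genResidual a f ≤ genResidual a (f * g) := by
  simp only [Ideal.span_singleton_mul_le_iff, mem_genResidual_iff]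
  intro u hu i
  obtain ⟨b, hb⟩ := hu i
  refine ⟨g * b, ?_⟩
  simpa only [smul_sub, smul_smul] using mul_dvd_smul_derivation_mul hb g

end Residual

section LinearFactors

variable {K : Type*} [Field K] {m : ℕ} {a : Fin m → K}

lemma genResidual_mul_le_span_pair {p q : MvPolynomial (Fin m) K} (hp : p.IsHomogeneous 1)
    (hq : q.IsHomogeneous 1) (hpq : ∀ c : K, p ≠ c • q) (hpa : eval a p ≠ 0)
    (hqa : eval a q ≠ 0) : genResidual a (p * q) ≤ Ideal.span {p, q} := by
  intro u hu
  let H := eval a q • p - eval a p • q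
  have hH : H.IsHomogeneous 1 :=
    (homogeneousSubmodule (Fin m) K 1).sub_mem (Submodule.smul_mem _ _ hp)
      (Submodule.smul_mem _ _ hq)
  have hH0 : H ≠ 0 := fun h => hpq ((eval a q)⁻¹ * eval a p) <| by
    rw [mul_smul, ← sub_eq_zero.1 h, inv_smul_smul₀ hqa]
  have hDH : directionalDerivation a H = 0 := by
    simp [directionalDerivation_of_isHomogeneous_one a hH, H, smul_eval, mul_comm]
  obtain ⟨i, hi⟩ := exists_isUnit_pderiv_of_isHomogeneous_one hH hH0
  obtain ⟨b, hb⟩ := mem_genResidual_iff.1 hu i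
  let θ : Derivation K (MvPolynomial (Fin m) K) (MvPolynomial (Fin m) K) :=
    u • pderiv i - b • directionalDerivation a
  have hrel : IsRelPrime p q := isRelPrime_of_isHomogeneous_one hp hq
    (fun h => hpa (by rw [h, map_zero])) (fun h => hqa (by rw [h, map_zero])) hpq
  have hθH : θ H ∈ Ideal.span {p, q} :=
    derivation_smul_sub_smul_mem_span_pair hrel θ hb (eval a q) (eval a p)
  have huH : θ H = u * pderiv i H := by
    simp [θ, hDH]
  exact (Ideal.mul_unit_mem_iff_mem _ hi).1 (huH ▸ hθH)

lemma genResidual_prod_mul_prod_le_iInf {ι κ : Type*} [Fintype ι] [Fintype κ]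
    {F : ι → MvPolynomial (Fin m) K} {G : κ → MvPolynomial (Fin m) K}
    (hsq : Squarefree ((∏ i, F i) * ∏ j, G j))
    (hF : ∀ i, (F i).IsHomogeneous 1) (hG : ∀ j, (G j).IsHomogeneous 1)
    (hFG : ∀ i j, ∀ c : K, F i ≠ c • G j)
    (hFa : ∀ i, eval a (F i) ≠ 0) (hGa : ∀ j, eval a (G j) ≠ 0) :
    genResidual a ((∏ i, F i) * ∏ j, G j) ≤ ⨅ i, ⨅ j, Ideal.span {F i, G j} :=
  le_iInf₂ fun i j =>
    (genResidual_le_of_dvd hsq (mul_dvd_mul (Finset.dvd_prod_of_mem F (Finset.mem_univ i))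
      (Finset.dvd_prod_of_mem G (Finset.mem_univ j)))).trans
    (genResidual_mul_le_span_pair (hF i) (hG j) (hFG i j) (hFa i) (hGa j))

lemma isSMulRegular_quotient_genResidual_prod {ι : Type*} [Fintype ι]
    {F : ι → MvPolynomial (Fin m) K} {g : MvPolynomial (Fin m) K}
    (hF : ∀ i, (F i).IsHomogeneous 1) (hprop : ∀ i j, i ≠ j → ∀ c : K, F i ≠ c • F j)
    (hht : ∀ i j, i ≠ j → 3 ≤ idealHeight (Ideal.span {F i, F j, g}))
    (hFa : ∀ i, eval a (F i) ≠ 0) :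
    IsSMulRegular (MvPolynomial (Fin m) K ⧸ genResidual a (∏ i, F i)) g := by
  have hF0 (i : ι) : F i ≠ 0 := fun h => hFa i (by rw [h, map_zero])
  have hunit (i : ι) : IsUnit (directionalDerivation a (F i)) := by
    rw [directionalDerivation_of_isHomogeneous_one a (hF i)]
    exact (hFa i).isUnit.map C
  rw [genResidual, lderiv_eq_directionalDerivation]
  refine isSMulRegular_quotient_colon (isSMulRegular_quotient_span_prod_derivation _
    (fun i _ => hunit i) (fun i _ j _ hij => ?_) fun i _ j _ hij => ?_) _
  · exact isRelPrime_of_isHomogeneous_one (hF i) (hF j) (hF0 i) (hF0 j) (hprop i j hij)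
  · exact isSMulRegular_quotient_span_pair_of_three_le_idealHeight
      (isPrime_span_pair_of_isHomogeneous_one (hF i) (hF j)) (hht i j hij)

end LinearFactors

section SpanProd

variable {σ K ι κ : Type*} [Finite σ] [Field K] [Fintype ι] [Fintype κ]

lemma span_prod_prod_eq_iInf_of_three_le_idealHeight
    {F : ι → MvPolynomial σ K} {G : κ → MvPolynomial σ K}
    (hF : ∀ i, (F i).IsHomogeneous 1) (hG : ∀ i, (G i).IsHomogeneous 1)
    (hhtF : ∀ i j, i ≠ j → 3 ≤ idealHeight (Ideal.span {F i, F j, ∏ k, G k}))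
    (hhtG : ∀ i j, i ≠ j → 3 ≤ idealHeight (Ideal.span {G i, G j, ∏ k, F k})) :
    Ideal.span {∏ k, F k, ∏ k, G k} = ⨅ i, ⨅ j, Ideal.span {F i, G j} := by
  refine span_prod_prod_eq_iInf (fun k i j hij => ?_) fun k i j hij => ?_
  · exact isSMulRegular_quotient_span_pair_of_dvd_of_three_le_idealHeight
      (isPrime_span_pair_of_isHomogeneous_one (hF j) (hG k))
      (Finset.dvd_prod_of_mem G (Finset.mem_univ k)) (hhtF i j hij)
  · exact isSMulRegular_quotient_span_pair_of_dvd_of_three_le_idealHeight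
      (isPrime_span_pair_of_isHomogeneous_one (hG j) (hF k))
      (Finset.dvd_prod_of_mem F (Finset.mem_univ k)) (hhtG i j hij)

end SpanProd

theorem stmt_15_general {K : Type*} [Field K] {m : ℕ} {ι κ : Type*} [Fintype ι] [Fintype κ]
    {F : ι → MvPolynomial (Fin m) K} {G : κ → MvPolynomial (Fin m) K}
    (hFhom : ∀ i, (F i).IsHomogeneous 1) (hGhom : ∀ i, (G i).IsHomogeneous 1)
    (hFprop : ∀ i j, i ≠ j → ∀ c : K, F i ≠ c • F j)
    (hGprop : ∀ i j, i ≠ j → ∀ c : K, G i ≠ c • G j)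
    (hFG : ∀ i j, ∀ c : K, F i ≠ c • G j)
    (hhtF : ∀ i j, i ≠ j → 3 ≤ idealHeight (Ideal.span {F i, F j, ∏ k, G k}))
    (hhtG : ∀ i j, i ≠ j → 3 ≤ idealHeight (Ideal.span {∏ k, F k, G i, G j}))
    {a : Fin m → K} (hFa : ∀ i, eval a (F i) ≠ 0) (hGa : ∀ i, eval a (G i) ≠ 0) :
    (genResidual a ((∏ k, F k) * ∏ k, G k) =
      genResidual a (∏ k, F k) ⊓ genResidual a (∏ k, G k) ⊓
        Ideal.span {∏ k, F k, ∏ k, G k}) ∧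
    (genResidual a ((∏ k, F k) * ∏ k, G k) =
      Ideal.span {∏ k, G k} * genResidual a (∏ k, F k) ⊔
        Ideal.span {∏ k, F k} * genResidual a (∏ k, G k)) := by
  have hhtG' (i j : κ) (hij : i ≠ j) : 3 ≤ idealHeight (Ideal.span {G i, G j, ∏ k, F k}) := by
    rw [Set.pair_comm, Set.insert_comm]
    exact hhtG i j hij
  have hsq : Squarefree ((∏ k, F k) * ∏ k, G k) :=
    squarefree_prod_mul_prod_of_isHomogeneous_one hFhom hGhom
      (fun i h => hFa i (by rw [h, map_zero])) (fun i h => hGa i (by rw [h, map_zero]))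
      hFprop hGprop hFG
  have hspan : Ideal.span {∏ k, F k, ∏ k, G k} = ⨅ i, ⨅ j, Ideal.span {F i, G j} :=
    span_prod_prod_eq_iInf_of_three_le_idealHeight hFhom hGhom hhtF hhtG'
  have hupper : genResidual a ((∏ k, F k) * ∏ k, G k) ≤ genResidual a (∏ k, F k) ⊓
      genResidual a (∏ k, G k) ⊓ Ideal.span {∏ k, F k, ∏ k, G k} :=
    le_inf (le_inf (genResidual_le_of_dvd hsq (dvd_mul_right _ _))
      (genResidual_le_of_dvd hsq (dvd_mul_left _ _)))
      (hspan ▸ genResidual_prod_mul_prod_le_iInf hsq hFhom hGhom hFG hFa hGa)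
  have hlower : Ideal.span {∏ k, G k} * genResidual a (∏ k, F k) ⊔
      Ideal.span {∏ k, F k} * genResidual a (∏ k, G k) ≤
        genResidual a ((∏ k, F k) * ∏ k, G k) :=
    sup_le (span_singleton_mul_genResidual_le _ _)
      (mul_comm (∏ k, G k) _ ▸ span_singleton_mul_genResidual_le _ _)
  have hexchange := inf_inf_span_pair_eq_sup (self_mem_genResidual (a := a) (∏ k, F k))
    (self_mem_genResidual (∏ k, G k))
    (isSMulRegular_quotient_genResidual_prod hFhom hFprop hhtF hFa)
    (isSMulRegular_quotient_genResidual_prod hGhom hGprop hhtG' hGa)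
  exact ⟨hupper.antisymm (hexchange.trans_le hlower), (hupper.trans_eq hexchange).antisymm hlower⟩

/-- **Liaison Addition for general residuals.**  Let `K` have
characteristic zero and let `A(fg) = A(f) ∪ A(g) ⊂ ℙⁿ` be a hyperplane arrangement, where
`f = f₁⋯f_s` and `g = g₁⋯g_t` are squarefree products of linear forms with `fg`
squarefree, such that (i) the ideal `(f_i, f_j, g)` has height 3 whenever `i ≠ j`, and
(ii) the ideal `(f, g_i, g_j)` has height 3 whenever `i ≠ j`.  Then, for a general linear
form `ℓ`, the general residuals with respect to `ℓ` satisfy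
(a) `r_{A(fg)} = r_{A(f)} ∩ r_{A(g)} ∩ (f, g)`, and
(b) `r_{A(fg)} = g·r_{A(f)} + f·r_{A(g)}`. -/
theorem stmt_15 {K : Type*} [Field K] [CharZero K] {n s t : ℕ} (hs : 1 ≤ s) (ht : 1 ≤ t)
    (F : Fin s → MvPolynomial (Fin (n + 1)) K)
    (G : Fin t → MvPolynomial (Fin (n + 1)) K)
    (hFhom : ∀ i, (F i).IsHomogeneous 1) (hFne : ∀ i, F i ≠ 0)
    (hGhom : ∀ i, (G i).IsHomogeneous 1) (hGne : ∀ i, G i ≠ 0)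
    (hFprop : ∀ i j, i ≠ j → ∀ c : K, F i ≠ c • F j)
    (hGprop : ∀ i j, i ≠ j → ∀ c : K, G i ≠ c • G j)
    (hFG : ∀ i j, ∀ c : K, F i ≠ c • G j)
    (hhtF : ∀ i j, i ≠ j →
      idealHeight (Ideal.span {F i, F j, ∏ k, G k}) = 3)
    (hhtG : ∀ i j, i ≠ j →
      idealHeight (Ideal.span {∏ k, F k, G i, G j}) = 3) :
    ∃ p : MvPolynomial (Fin (n + 1)) K, p ≠ 0 ∧
      ∀ a : Fin (n + 1) → K, eval a p ≠ 0 →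
        (genResidual a ((∏ k, F k) * ∏ k, G k) =
          genResidual a (∏ k, F k) ⊓ genResidual a (∏ k, G k) ⊓
            Ideal.span {∏ k, F k, ∏ k, G k}) ∧
        (genResidual a ((∏ k, F k) * ∏ k, G k) =
          Ideal.span {∏ k, G k} * genResidual a (∏ k, F k) ⊔
            Ideal.span {∏ k, F k} * genResidual a (∏ k, G k)) := by
  refine ⟨(∏ k, F k) * ∏ k, G k, mul_ne_zero (Finset.prod_ne_zero_iff.2 fun i _ => hFne i)
    (Finset.prod_ne_zero_iff.2 fun i _ => hGne i), fun a ha => ?_⟩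
  simp only [map_mul, map_prod, mul_ne_zero_iff, Finset.prod_ne_zero_iff, Finset.mem_univ,
    forall_const] at ha
  exact stmt_15_general hFhom hGhom hFprop hGprop hFG (fun i j hij => (hhtF i j hij).ge)
    (fun i j hij => (hhtG i j hij).ge) ha.1 ha.2
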